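/- For any worms A and B, if A ⊢_RC B then A ⊢_WC B (the main conservativity direction). -/

import Mathlib

/-!
A formula `φ` is interpreted as a set `sem φ` of worms: `D` lies in the interpretation of `⟨α⟩φ` when
`D ⊢ α :: E` in WC for some `E` in the interpretation of `φ`, and conjunction is intersection. For
a worm `A`, the interpretation is exactly `{D | D ⊢ A}`, so the theorem is soundness of RC for this
interpretation, applied to `D = A`.

The only rule whose soundness needs work is `⟨α⟩φ ∧ ⟨β⟩ψ ⊢ ⟨α⟩(φ ∧ ⟨β⟩ψ)`. It follows from the
existence of binary meets in WC (`WCDer.exists_meet`): any `X`, `Y` have a greatest lower bound `M`,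
and moreover `D ⊢ α :: X` and `D ⊢ Y` give `D ⊢ α :: M` when `Y` is empty or starts below `α`.

Meets are built by induction on the total length. Let `μ` be the least entry of `X` and `Y`, and cut
each worm at its first `μ`: the part before it has entries above `μ`, and the part after it has
entries `≥ μ` (`WCDer.exists_split`). The front parts have a meet `M₁` by induction. The rear parts
are comparable after prefixing `μ`, by the trichotomy `WCDer.trichotomy`: worms with entries `≥ μ`
satisfy `X ⊢ μ :: Y`, `Y ⊢ μ :: X` or `X ≡ Y`. If `μ :: Z` is the strongest of them, then
`M = M₁ ++ μ :: Z`.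
-/

/-- A worm is a finite list of ordinals; `[]` is ⊤. -/
abbrev Worm : Type _ := List Ordinal

/-- Formulas of the closed Reflection Calculus RC⁰. -/
inductive RCFormula : Type _ where
  | top : RCFormula
  | and : RCFormula → RCFormula → RCFormula
  | dia : Ordinal → RCFormula → RCFormula

/-- The RC⁰ formula corresponding to a worm. -/
def Worm.toRC : Worm → RCFormula
  | [] => .top
  | α :: A => .dia α (Worm.toRC A)

/-- Derivability in the closed Reflection Calculus RC⁰. -/
inductive RCDer : RCFormula → RCFormula → Prop where
  | refl (φ) : RCDer φ φ
  | top (φ) : RCDer φ .top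
  | andL (φ ψ) : RCDer (.and φ ψ) φ
  | andR (φ ψ) : RCDer (.and φ ψ) ψ
  | trans_ax (α φ) : RCDer (.dia α (.dia α φ)) (.dia α φ)
  | mono_ax {α β : Ordinal} (φ) : β < α → RCDer (.dia α φ) (.dia β φ)
  | ax5 {α β : Ordinal} (φ ψ) : β < α →
      RCDer (.and (.dia α φ) (.dia β ψ)) (.dia α (.and φ (.dia β ψ)))
  | cut {φ ψ χ} : RCDer φ ψ → RCDer ψ χ → RCDer φ χ
  | andI {φ ψ χ} : RCDer φ ψ → RCDer φ χ → RCDer φ (.and ψ χ)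
  | nec {φ ψ} (α) : RCDer φ ψ → RCDer (.dia α φ) (.dia α ψ)

/-- Derivability in the Worm Calculus WC. -/
inductive WCDer : Worm → Worm → Prop where
  | top (A) : WCDer A []
  | trans_ax (α A) : WCDer (α :: α :: A) (α :: A)
  | mono_ax {α β : Ordinal} (A) : β < α → WCDer (α :: A) (β :: A)
  | cut {A B C} : WCDer A B → WCDer B C → WCDer A C
  | nec {A B} (α) : WCDer A B → WCDer (α :: A) (α :: B)
  | rule3 {A B C} (α) : WCDer A B → WCDer A (α :: C) →
      (∀ β ∈ B, α + 1 ≤ β) → WCDer A (B ++ α :: C)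

open Classical in
/-- The α-head of a worm: its longest initial segment with all entries ≥ α. -/
noncomputable def wormHead (α : Ordinal) (A : Worm) : Worm :=
  A.takeWhile (fun β => decide (α ≤ β))

open Classical in
/-- The α-remainder of a worm: what is left after removing the α-head. -/
noncomputable def wormRem (α : Ordinal) (A : Worm) : Worm :=
  A.dropWhile (fun β => decide (α ≤ β))

/-- The α-body of a worm: the tail of its (α+1)-remainder. -/
noncomputable def wormBody (α : Ordinal) (A : Worm) : Worm :=
  (wormRem (α + 1) A).tail

/-- A Kripke model: a carrier with a relation for each ordinal. -/
structure KripkeModel : Type _ where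
  W : Type _
  R : Ordinal → W → W → Prop

/-- Forcing of worms in a Kripke model. -/
def KripkeModel.forces (M : KripkeModel) : M.W → Worm → Prop
  | _, [] => True
  | x, α :: A => ∃ y, M.R α x y ∧ M.forces y A

/-- A Kripke model is Euclidean if `x R_α y` and `x R_β z` with `β < α` imply `y R_β z`. -/
def KripkeModel.Euclidean (M : KripkeModel) : Prop :=
  ∀ ⦃α β : Ordinal⦄, β < α → ∀ ⦃x y z : M.W⦄, M.R α x y → M.R β x z → M.R β y z

/-- A Kripke model is a universal model for WC if derivability coincides with
semantic consequence on the model. -/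
def KripkeModel.UniversalWC (M : KripkeModel) : Prop :=
  ∀ A B : Worm, WCDer A B ↔ ∀ x : M.W, M.forces x A → M.forces x B

/-! ### Basic derivations in WC -/

namespace WCDer

universe u

theorem refl (A : Worm.{u}) : WCDer A A := by
  induction A with
  | nil => exact .top _
  | cons a A ih => exact .nec a ih

theorem append_left (A B : Worm.{u}) : WCDer (A ++ B) A := by
  induction A with
  | nil => exact .top _
  | cons a A ih => exact .nec a ih

theorem mono_le {a b : Ordinal.{u}} (h : b ≤ a) (A : Worm.{u}) : WCDer (a :: A) (b :: A) := by
  rcases h.eq_or_lt with rfl | h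
  · exact refl _
  · exact .mono_ax _ h

theorem absorb {a m : Ordinal.{u}} (h : m ≤ a) {A Z : Worm.{u}} (hA : WCDer A (m :: Z)) :
    WCDer (a :: A) (m :: Z) :=
  .cut (.nec a hA) (.cut (mono_le h _) (.trans_ax _ _))

theorem append_right {m : Ordinal.{u}} {A Z : Worm.{u}} (h : ∀ b ∈ A, m ≤ b) :
    WCDer (A ++ m :: Z) (m :: Z) := by
  induction A with
  | nil => exact refl _
  | cons a A ih =>
    exact absorb (h a (by simp)) (ih fun b hb => h b (by simp [hb]))

/-! ### Cutting worms, trichotomy, and meets -/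

/-- Cutting a worm with entries `≥ m` at its first `m`. Here `X₁` is the part before the first `m`,
and `R` holds the part after it: `R` is empty if `m` does not occur, and a singleton otherwise.
The worm `X` is then the conjunction of `X₁` and the `m :: Z` with `Z ∈ R`, also under any prefix
`P` with entries above `m`. -/
theorem exists_split (m : Ordinal.{u}) (X : Worm.{u}) (hX : ∀ b ∈ X, m ≤ b) :
    ∃ (X₁ : Worm.{u}) (R : List Worm.{u}), (∀ b ∈ X₁, m + 1 ≤ b) ∧ X₁ <+: X ∧
      (m ∈ X → X₁.length < X.length ∧ R ≠ []) ∧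
      (∀ Z ∈ R, Z.length < X.length ∧ (∀ b ∈ Z, m ≤ b) ∧ WCDer X (m :: Z)) ∧
      ∀ (P D : Worm.{u}), (∀ b ∈ P, m + 1 ≤ b) → WCDer D (P ++ X₁) →
        (∀ Z ∈ R, WCDer D (m :: Z)) → WCDer D (P ++ X) := by
  induction X with
  | nil => exact ⟨[], [], by simp, by simp, by simp, by simp, fun P D _ h _ => h⟩
  | cons a X ih =>
    have hX' : ∀ b ∈ X, m ≤ b := fun b hb => hX b (by simp [hb])
    rcases (hX a (by simp)).eq_or_lt with rfl | ha
    · refine ⟨[], [X], by simp, by simp, by simp, ?_, ?_⟩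
      · simpa using ⟨hX', refl _⟩
      · intro P D hP h hR
        exact .rule3 _ (by simpa using h) (hR X (by simp)) hP
    · obtain ⟨X₁, R, h1, hp, hm, hR, hc⟩ := ih hX'
      have ha' : m + 1 ≤ a := Order.add_one_le_of_lt ha
      refine ⟨a :: X₁, R, ?_, ?_, ?_, ?_, ?_⟩
      · exact List.forall_mem_cons.2 ⟨ha', h1⟩
      · simpa using hp
      · intro hmem
        rcases List.mem_cons.1 hmem with rfl | hmem
        · exact absurd ha (lt_irrefl _)
        · simpa using hm hmem
      · intro Z hZ
        obtain ⟨h2, h3, h4⟩ := hR Z hZ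
        exact ⟨by simp; omega, h3, absorb ha.le h4⟩
      · intro P D hP h hZ
        have := hc (P ++ [a]) D (by
          intro b hb
          rcases List.mem_append.1 hb with hb | hb
          · exact hP b hb
          · simp at hb; exact hb ▸ ha') (by simpa using h) hZ
        simpa using this

theorem exists_min (L : Worm.{u}) (h : L ≠ []) : ∃ m ∈ L, ∀ b ∈ L, m ≤ b := by
  obtain ⟨a, ha⟩ := List.exists_mem_of_ne_nil L h
  obtain ⟨m, hm, hmin⟩ := (wellFounded_lt (α := Ordinal.{u})).has_min {b | b ∈ L} ⟨a, ha⟩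
  exact ⟨m, hm, fun b hb => not_lt.1 (hmin b hb)⟩

theorem trichotomy (n : ℕ) : ∀ (X Y : Worm.{u}) (m : Ordinal.{u}), X.length + Y.length ≤ n →
    (∀ b ∈ X, m ≤ b) → (∀ b ∈ Y, m ≤ b) →
    WCDer X (m :: Y) ∨ WCDer Y (m :: X) ∨ (WCDer X Y ∧ WCDer Y X) := by
  induction n with
  | zero =>
    intro X Y m hn _ _
    obtain rfl : X = [] := List.length_eq_zero_iff.1 (by omega)
    obtain rfl : Y = [] := List.length_eq_zero_iff.1 (by omega)
    exact .inr (.inr ⟨.top _, .top _⟩)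
  | succ n ih =>
    intro X Y m₀ hn hX₀ hY₀
    by_cases hne : X ++ Y = []
    · obtain ⟨rfl, rfl⟩ := List.append_eq_nil_iff.1 hne
      exact .inr (.inr ⟨.top _, .top _⟩)
    obtain ⟨m, hm, hmin⟩ := exists_min _ hne
    have hX : ∀ b ∈ X, m ≤ b := fun b hb => hmin b (by simp [hb])
    have hY : ∀ b ∈ Y, m ≤ b := fun b hb => hmin b (by simp [hb])
    have hm₀ : m₀ ≤ m := by
      rcases List.mem_append.1 hm with h | h
      · exact hX₀ m h
      · exact hY₀ m h
    -- It suffices to treat the least entry `m`, since `m₀ ≤ m`.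
    suffices h : WCDer X (m :: Y) ∨ WCDer Y (m :: X) ∨ (WCDer X Y ∧ WCDer Y X) by
      rcases h with h | h | h
      · exact .inl (.cut h (mono_le hm₀ _))
      · exact .inr (.inl (.cut h (mono_le hm₀ _)))
      · exact .inr (.inr h)
    obtain ⟨X₁, R, hX1, hXp, hXm, hXR, hXc⟩ := exists_split m X hX
    obtain ⟨Y₁, S, hY1, hYp, hYm, hYS, hYc⟩ := exists_split m Y hY
    have hXl := hXp.length_le
    have hYl := hYp.length_le
    have hlt : X₁.length + Y₁.length ≤ n := by
      rcases List.mem_append.1 hm with h | h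
      · have := (hXm h).1; omega
      · have := (hYm h).1; omega
    -- A rear part of `Y` that proves `X` or `m :: X` settles the matter, and symmetrically.
    by_cases hS : ∀ Z ∈ S, WCDer X (m :: Z)
    swap
    · push Not at hS
      obtain ⟨Z, hZ, hnot⟩ := hS
      obtain ⟨h1, h2, h3⟩ := hYS Z hZ
      rcases ih X Z m (by omega) hX h2 with h | h | h
      · exact absurd h hnot
      · exact .inr (.inl (.cut h3 (.cut (.nec m h) (.trans_ax _ _))))
      · exact .inr (.inl (.cut h3 (.nec m h.2)))
    by_cases hR : ∀ Z ∈ R, WCDer Y (m :: Z)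
    swap
    · push Not at hR
      obtain ⟨Z, hZ, hnot⟩ := hR
      obtain ⟨h1, h2, h3⟩ := hXR Z hZ
      rcases ih Y Z m (by omega) hY h2 with h | h | h
      · exact absurd h hnot
      · exact .inl (.cut h3 (.cut (.nec m h) (.trans_ax _ _)))
      · exact .inl (.cut h3 (.nec m h.2))
    have hXX₁ : WCDer X X₁ := by
      obtain ⟨T, rfl⟩ := hXp; exact append_left _ _
    have hYY₁ : WCDer Y Y₁ := by
      obtain ⟨T, rfl⟩ := hYp; exact append_left _ _
    have hmm : m ≤ m + 1 := (Order.lt_add_one_iff.2 le_rfl).le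
    rcases ih X₁ Y₁ (m + 1) hlt hX1 hY1 with h | h | ⟨h, h'⟩
    · exact .inl (.cut (hYc [m + 1] X (by simp) (.cut hXX₁ h) hS) (mono_le hmm _))
    · exact .inr (.inl (.cut (hXc [m + 1] Y (by simp) (.cut hYY₁ h) hR) (mono_le hmm _)))
    · exact .inr (.inr ⟨hYc [] X (by simp) (.cut hXX₁ h) hS, hXc [] Y (by simp) (.cut hYY₁ h') hR⟩)

theorem comparable (m : Ordinal.{u}) (X Y : Worm.{u}) (hX : ∀ b ∈ X, m ≤ b)
    (hY : ∀ b ∈ Y, m ≤ b) : WCDer (m :: X) (m :: Y) ∨ WCDer (m :: Y) (m :: X) := by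
  rcases trichotomy _ X Y m le_rfl hX hY with h | h | h
  · exact .inl (.cut (.nec m h) (.trans_ax _ _))
  · exact .inr (.cut (.nec m h) (.trans_ax _ _))
  · exact .inl (.nec m h.1)

theorem exists_strongest (m : Ordinal.{u}) (L : List Worm.{u}) (hL : ∀ Z ∈ L, ∀ b ∈ Z, m ≤ b)
    (hne : L ≠ []) : ∃ Z ∈ L, ∀ V ∈ L, WCDer (m :: Z) (m :: V) := by
  induction L with
  | nil => exact absurd rfl hne
  | cons X L ih =>
    by_cases hL0 : L = []
    · subst hL0
      exact ⟨X, by simp, by simpa using refl _⟩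
    · obtain ⟨Z, hZ, hmax⟩ := ih (fun Z hZ => hL Z (by simp [hZ])) hL0
      rcases comparable m X Z (hL X (by simp)) (hL Z (by simp [hZ])) with h | h
      · refine ⟨X, by simp, fun V hV => ?_⟩
        rcases List.mem_cons.1 hV with rfl | hV
        · exact refl _
        · exact .cut h (hmax V hV)
      · refine ⟨Z, by simp [hZ], fun V hV => ?_⟩
        rcases List.mem_cons.1 hV with rfl | hV
        · exact h
        · exact hmax V hV

/-- Binary meets exist in WC, stay within the worms with entries `≥ m`, and satisfy the counterpart
of `⟨α⟩φ ∧ ⟨β⟩ψ ⊢ ⟨α⟩(φ ∧ ⟨β⟩ψ)`. The condition on `Y.head?` says that `Y` is empty or starts with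
an ordinal below `a`; unlike `Y = β :: F`, it passes to initial segments of `Y`. -/
theorem exists_meet (n : ℕ) : ∀ (X Y : Worm.{u}) (m : Ordinal.{u}), X.length + Y.length ≤ n →
    (∀ b ∈ X, m ≤ b) → (∀ b ∈ Y, m ≤ b) →
    ∃ M : Worm.{u}, (∀ b ∈ M, m ≤ b) ∧ WCDer M X ∧ WCDer M Y ∧
      (∀ D, WCDer D X → WCDer D Y → WCDer D M) ∧
      ∀ (D : Worm.{u}) (a : Ordinal.{u}), WCDer D (a :: X) → WCDer D Y →
        (∀ b ∈ Y.head?, b < a) → WCDer D (a :: M) := by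
  induction n with
  | zero =>
    intro X Y m hn _ _
    obtain rfl : X = [] := List.length_eq_zero_iff.1 (by omega)
    obtain rfl : Y = [] := List.length_eq_zero_iff.1 (by omega)
    exact ⟨[], by simp, .top _, .top _, fun D h _ => h, fun D a h _ _ => h⟩
  | succ n ih =>
    intro X Y m₀ hn hX₀ hY₀
    by_cases hY0 : Y = []
    · subst hY0
      exact ⟨X, hX₀, refl _, .top _, fun D h _ => h, fun D a h _ _ => h⟩
    have hne : X ++ Y ≠ [] := by simp [hY0]
    obtain ⟨m, hm, hmin⟩ := exists_min _ hne
    have hX : ∀ b ∈ X, m ≤ b := fun b hb => hmin b (by simp [hb])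
    have hY : ∀ b ∈ Y, m ≤ b := fun b hb => hmin b (by simp [hb])
    have hm₀ : m₀ ≤ m := by
      rcases List.mem_append.1 hm with h | h
      · exact hX₀ m h
      · exact hY₀ m h
    obtain ⟨X₁, R, hX1, hXp, hXm, hXR, hXc⟩ := exists_split m X hX
    obtain ⟨Y₁, S, hY1, hYp, hYm, hYS, hYc⟩ := exists_split m Y hY
    have hXl := hXp.length_le
    have hYl := hYp.length_le
    have hXX₁ : WCDer X X₁ := by
      obtain ⟨T, rfl⟩ := hXp; exact append_left _ _
    have hYY₁ : WCDer Y Y₁ := by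
      obtain ⟨T, rfl⟩ := hYp; exact append_left _ _
    have hlt : X₁.length + Y₁.length ≤ n := by
      rcases List.mem_append.1 hm with h | h
      · have := (hXm h).1; omega
      · have := (hYm h).1; omega
    have hRS : R ++ S ≠ [] := by
      rcases List.mem_append.1 hm with h | h
      · simp [(hXm h).2]
      · simp [(hYm h).2]
    have hRSm : ∀ Z ∈ R ++ S, ∀ b ∈ Z, m ≤ b := by
      intro Z hZ
      rcases List.mem_append.1 hZ with h | h
      · exact (hXR Z h).2.1
      · exact (hYS Z h).2.1
    obtain ⟨M₁, hM1, hMX, hMY, hMu, hMa⟩ := ih X₁ Y₁ (m + 1) hlt hX1 hY1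
    obtain ⟨Z, hZ, hZmax⟩ := exists_strongest m _ hRSm hRS
    have hmm : m ≤ m + 1 := (Order.lt_add_one_iff.2 le_rfl).le
    have hMZ : WCDer (M₁ ++ m :: Z) (m :: Z) := append_right fun b hb => hmm.trans (hM1 b hb)
    have hMM : WCDer (M₁ ++ m :: Z) M₁ := append_left _ _
    refine ⟨M₁ ++ m :: Z, ?_, ?_, ?_, ?_, ?_⟩
    · intro b hb
      refine hm₀.trans ?_
      rcases List.mem_append.1 hb with h | h
      · exact hmm.trans (hM1 b h)
      · rcases List.mem_cons.1 h with rfl | h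
        · exact le_rfl
        · exact hRSm Z hZ b h
    · exact hXc [] _ (by simp) (.cut hMM hMX) fun V hV => .cut hMZ (hZmax V (by simp [hV]))
    · exact hYc [] _ (by simp) (.cut hMM hMY) fun V hV => .cut hMZ (hZmax V (by simp [hV]))
    · intro D hDX hDY
      refine .rule3 _ (hMu D (.cut hDX hXX₁) (.cut hDY hYY₁)) ?_ hM1
      rcases List.mem_append.1 hZ with h | h
      · exact .cut hDX (hXR Z h).2.2
      · exact .cut hDY (hYS Z h).2.2
    · intro D a hDX hDY ha
      have hma : m < a := by
        cases Y with
        | nil => exact absurd rfl hY0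
        | cons b F => exact (hY b (by simp)).trans_lt (ha b (by simp))
      have hDM : WCDer D (a :: M₁) := by
        refine hMa D a (.cut hDX (.nec a hXX₁)) (.cut hDY hYY₁) fun b hb => ha b ?_
        obtain ⟨T, rfl⟩ := hYp
        cases Y₁ with
        | nil => simp at hb
        | cons c F => simpa using hb
      have hDZ : WCDer D (m :: Z) := by
        rcases List.mem_append.1 hZ with h | h
        · exact .cut hDX (absorb hma.le (hXR Z h).2.2)
        · exact .cut hDY (hYS Z h).2.2
      refine .rule3 (B := a :: M₁) m hDM hDZ ?_
      intro b hb
      rcases List.mem_cons.1 hb with rfl | hb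
      · exact Order.add_one_le_of_lt hma
      · exact hM1 b hb

end WCDer

/-! ### Soundness of RC -/

/-- The set of worms forcing a formula: `D` forces `⟨α⟩φ` when `D ⊢ α :: E` in WC for some `E`
forcing `φ`. -/
def RCFormula.sem : RCFormula → Worm → Prop
  | .top, _ => True
  | .and φ ψ, D => φ.sem D ∧ ψ.sem D
  | .dia α φ, D => ∃ E, φ.sem E ∧ WCDer D (α :: E)

theorem RCFormula.sem_of_der (φ : RCFormula) : ∀ {D E : Worm}, WCDer D E → φ.sem E → φ.sem D := by
  induction φ with
  | top => intros; trivial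
  | and φ ψ ih1 ih2 => exact fun h hs => ⟨ih1 h hs.1, ih2 h hs.2⟩
  | dia α φ _ => exact fun h ⟨F, hF, hE⟩ => ⟨F, hF, .cut h hE⟩

theorem Worm.sem_toRC (A : Worm) : ∀ D, A.toRC.sem D ↔ WCDer D A := by
  induction A with
  | nil => exact fun D => ⟨fun _ => .top _, fun _ => trivial⟩
  | cons a A ih =>
    intro D
    constructor
    · rintro ⟨E, hE, hD⟩
      exact .cut hD (.nec a ((ih E).1 hE))
    · exact fun h => ⟨A, (ih A).2 (WCDer.refl A), h⟩

theorem RCDer.sound {φ ψ : RCFormula} (h : RCDer φ ψ) : ∀ D, φ.sem D → ψ.sem D := by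
  induction h with
  | refl φ => exact fun _ h => h
  | top φ => exact fun _ _ => trivial
  | andL φ ψ => exact fun _ h => h.1
  | andR φ ψ => exact fun _ h => h.2
  | trans_ax α φ =>
    rintro D ⟨E, ⟨F, hF, hE⟩, hD⟩
    exact ⟨F, hF, .cut (.cut hD (.nec α hE)) (.trans_ax _ _)⟩
  | mono_ax φ hlt =>
    rintro D ⟨E, hE, hD⟩
    exact ⟨E, hE, .cut hD (.mono_ax _ hlt)⟩
  | @ax5 α β φ ψ hlt =>
    rintro D ⟨⟨E, hE, hDE⟩, ⟨F, hF, hDF⟩⟩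
    obtain ⟨M, -, hME, hMF, -, hM⟩ :=
      WCDer.exists_meet _ E (β :: F) 0 le_rfl (fun _ _ => zero_le) (fun _ _ => zero_le)
    exact ⟨M, ⟨φ.sem_of_der hME hE, ⟨F, hF, hMF⟩⟩, hM D α hDE hDF (by simpa using hlt)⟩
  | cut _ _ ih1 ih2 => exact fun D h => ih2 D (ih1 D h)
  | andI _ _ ih1 ih2 => exact fun D h => ⟨ih1 D h, ih2 D h⟩
  | nec α _ ih =>
    rintro D ⟨E, hE, hD⟩
    exact ⟨E, ih E hE, hD⟩

theorem RC_implies_WC (A B : Worm) (h : RCDer A.toRC B.toRC) : WCDer A B :=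
  (B.sem_toRC A).1 (h.sound A ((A.sem_toRC A).2 (WCDer.refl A)))
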